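/- In the calculus λ_S, the diverging terms Ω and Ω Ω are contextually equivalent in the relaxed semantics: Ω ≈ Ω Ω. -/

import Mathlib

namespace LambdaS

/-- Terms of the calculus λ_S: variables, λ-abstractions, applications,
the shift operator `S k.t`, and the reset delimiter `⟨t⟩`. -/
inductive Tm : Type
  | var : ℕ → Tm
  | lam : ℕ → Tm → Tm
  | app : Tm → Tm → Tm
  | shift : ℕ → Tm → Tm
  | reset : Tm → Tm
  deriving DecidableEq

/-- A variable fresh for a finite set of variables. -/
def fresh (s : Finset ℕ) : ℕ := if h : s.Nonempty then s.max' h + 1 else 0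

namespace Tm

/-- Free variables. -/
def fv : Tm → Finset ℕ
  | var x => {x}
  | lam x t => fv t \ {x}
  | app t u => fv t ∪ fv u
  | shift k t => fv t \ {k}
  | reset t => fv t

def size : Tm → ℕ
  | var _ => 1
  | lam _ t => size t + 1
  | app t u => size t + size u + 1
  | shift _ t => size t + 1
  | reset t => size t + 1

/-- Renaming of free occurrences of a variable (used for α-renaming with a
fresh target variable). -/
def rename : Tm → ℕ → ℕ → Tm
  | var w, y, z => if w = y then var z else var w
  | lam w t, y, z => if w = y then lam w t else lam w (rename t y z)
  | app t u, y, z => app (rename t y z) (rename u y z)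
  | shift w t, y, z => if w = y then shift w t else shift w (rename t y z)
  | reset t, y, z => reset (rename t y z)

theorem size_rename (t : Tm) (y z : ℕ) : size (rename t y z) = size t := by
  induction t generalizing y z with
  | var w => simp only [rename]; split <;> rfl
  | lam w t ih => simp only [rename]; split <;> simp [size, ih]
  | app t u iht ihu => simp [rename, size, iht, ihu]
  | shift w t ih => simp only [rename]; split <;> simp [size, ih]
  | reset t ih => simp [rename, size, ih]

/-- Capture-avoiding substitution `t{v/x}` of `v` for the free occurrences of
`x` in `t`; bound variables are α-renamed when needed. -/
def subst : Tm → ℕ → Tm → Tm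
  | var w, x, v => if w = x then v else var w
  | lam y t, x, v =>
      if y = x then lam y t
      else if y ∈ fv v then
        lam (fresh (fv v ∪ fv t ∪ {x}))
          (subst (rename t y (fresh (fv v ∪ fv t ∪ {x}))) x v)
      else lam y (subst t x v)
  | app t u, x, v => app (subst t x v) (subst u x v)
  | shift y t, x, v =>
      if y = x then shift y t
      else if y ∈ fv v then
        shift (fresh (fv v ∪ fv t ∪ {x}))
          (subst (rename t y (fresh (fv v ∪ fv t ∪ {x}))) x v)
      else shift y (subst t x v)
  | reset t, x, v => reset (subst t x v)
termination_by t _ _ => size t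
decreasing_by all_goals simp [size_rename, size] <;> omega

end Tm

/-- Values: variables and λ-abstractions. -/
inductive IsValue : Tm → Prop
  | var (x : ℕ) : IsValue (Tm.var x)
  | lam (x : ℕ) (t : Tm) : IsValue (Tm.lam x t)

/-- A term is closed if it has no free variables. -/
def Closed (t : Tm) : Prop := t.fv = ∅

/-- Pure evaluation contexts E ::= □ | v E | E t. -/
inductive ECtx : Type
  | hole : ECtx
  | appR : (v : Tm) → IsValue v → ECtx → ECtx
  | appL : ECtx → Tm → ECtx

def ECtx.plug : ECtx → Tm → Tm
  | .hole, t => t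
  | .appR v _ E, t => Tm.app v (E.plug t)
  | .appL E u, t => Tm.app (E.plug t) u

def ECtx.fv : ECtx → Finset ℕ
  | .hole => ∅
  | .appR v _ E => v.fv ∪ E.fv
  | .appL E u => E.fv ∪ u.fv

/-- Composition of pure contexts: `(E.comp E').plug t = E.plug (E'.plug t)`. -/
def ECtx.comp : ECtx → ECtx → ECtx
  | .hole, E' => E'
  | .appR v hv E, E' => .appR v hv (E.comp E')
  | .appL E u, E' => .appL (E.comp E') u

/-- Evaluation contexts F ::= □ | v F | F t | ⟨F⟩. -/
inductive FCtx : Type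
  | hole : FCtx
  | appR : (v : Tm) → IsValue v → FCtx → FCtx
  | appL : FCtx → Tm → FCtx
  | reset : FCtx → FCtx

def FCtx.plug : FCtx → Tm → Tm
  | .hole, t => t
  | .appR v _ F, t => Tm.app v (F.plug t)
  | .appL F u, t => Tm.app (F.plug t) u
  | .reset F, t => Tm.reset (F.plug t)

def FCtx.fv : FCtx → Finset ℕ
  | .hole => ∅
  | .appR v _ F => v.fv ∪ F.fv
  | .appL F u => F.fv ∪ u.fv
  | .reset F => F.fv

/-- The function `λx.⟨E[x]⟩` representing the captured delimited context `E`,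
where `x` is chosen fresh (in particular `x ∉ fv E`). -/
def contFun (E : ECtx) : Tm :=
  Tm.lam (fresh E.fv) (Tm.reset (E.plug (Tm.var (fresh E.fv))))

/-- Call-by-value reduction →_v of λ_S. -/
inductive Red : Tm → Tm → Prop
  | beta (F : FCtx) (x : ℕ) (t v : Tm) :
      IsValue v →
      Red (F.plug (Tm.app (Tm.lam x t) v)) (F.plug (t.subst x v))
  | capture (F : FCtx) (E : ECtx) (k : ℕ) (t : Tm) :
      Red (F.plug (Tm.reset (E.plug (Tm.shift k t))))
          (F.plug (Tm.reset (t.subst k (contFun E))))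
  | resetVal (F : FCtx) (v : Tm) :
      IsValue v →
      Red (F.plug (Tm.reset v)) (F.plug v)

/-- A stuck term: not a value and unable to reduce. -/
def Stuck (t : Tm) : Prop := ¬ IsValue t ∧ ∀ t', ¬ Red t t'

/-- Normal forms: values and stuck terms. -/
def NormalForm (t : Tm) : Prop := IsValue t ∨ Stuck t

/-- A control-stuck term has the form E[S k.t]. -/
def ControlStuck (t : Tm) : Prop :=
  ∃ (E : ECtx) (k : ℕ) (s : Tm), t = E.plug (Tm.shift k s)

/-- Evaluation: `t ⇓ t'` iff `t →_v* t'` and `t'` is a normal form. -/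
def Evals (t t' : Tm) : Prop := Relation.ReflTransGen Red t t' ∧ NormalForm t'

/-- `t` evaluates to some value. -/
def EvalsToValue (t : Tm) : Prop := ∃ v, Relation.ReflTransGen Red t v ∧ IsValue v

/-- `t` evaluates to some control-stuck term. -/
def EvalsToStuck (t : Tm) : Prop :=
  ∃ s, Relation.ReflTransGen Red t s ∧ ControlStuck s

/-- General contexts C ::= □ | λx.C | t C | C t | S k.C | ⟨C⟩. -/
inductive Ctx : Type
  | hole : Ctx
  | lam : ℕ → Ctx → Ctx
  | appL : Ctx → Tm → Ctx
  | appR : Tm → Ctx → Ctx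
  | shift : ℕ → Ctx → Ctx
  | reset : Ctx → Ctx

def Ctx.plug : Ctx → Tm → Tm
  | .hole, t => t
  | .lam x C, t => Tm.lam x (C.plug t)
  | .appL C u, t => Tm.app (C.plug t) u
  | .appR u C, t => Tm.app u (C.plug t)
  | .shift k C, t => Tm.shift k (C.plug t)
  | .reset C, t => Tm.reset (C.plug t)

def Ctx.fv : Ctx → Finset ℕ
  | .hole => ∅
  | .lam x C => C.fv \ {x}
  | .appL C u => C.fv ∪ u.fv
  | .appR u C => u.fv ∪ C.fv
  | .shift k C => C.fv \ {k}
  | .reset C => C.fv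

/-- Contextual equivalence ≈ for the relaxed semantics (on closed terms):
tests evaluation to values and evaluation to control-stuck terms in every
closed context. -/
def CtxEquiv (t0 t1 : Tm) : Prop :=
  ∀ C : Ctx, C.fv = ∅ →
    (EvalsToValue (C.plug t0) ↔ EvalsToValue (C.plug t1)) ∧
    (EvalsToStuck (C.plug t0) ↔ EvalsToStuck (C.plug t1))

/-- Contextual equivalence ≈_p for the original semantics: tests evaluation to
values of ⟨C[·]⟩ in every closed context C. -/
def CtxEquivP (t0 t1 : Tm) : Prop :=
  ∀ C : Ctx, C.fv = ∅ →
    (EvalsToValue (Tm.reset (C.plug t0)) ↔ EvalsToValue (Tm.reset (C.plug t1)))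

/-- Contextual equivalence ≈_E testing only with closed evaluation contexts. -/
def ECtxEquiv (t0 t1 : Tm) : Prop :=
  ∀ F : FCtx, F.fv = ∅ →
    (EvalsToValue (F.plug t0) ↔ EvalsToValue (F.plug t1)) ∧
    (EvalsToStuck (F.plug t0) ↔ EvalsToStuck (F.plug t1))

/-- Applicative simulation. -/
def IsAppSim (R : Tm → Tm → Prop) : Prop :=
  ∀ t0 t1, R t0 t1 →
    (∀ t0', Red t0 t0' →
      ∃ t1', Relation.ReflTransGen Red t1 t1' ∧ R t0' t1') ∧
    (∀ x t0', t0 = Tm.lam x t0' →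
      ∃ t1', Relation.ReflTransGen Red t1 (Tm.lam x t1') ∧
        ∀ v, IsValue v → Closed v → R (t0'.subst x v) (t1'.subst x v)) ∧
    (∀ (E0 : ECtx) (k : ℕ) (t0' : Tm), t0 = E0.plug (Tm.shift k t0') →
      ∃ (E1 : ECtx) (t1' : Tm),
        Relation.ReflTransGen Red t1 (E1.plug (Tm.shift k t1')) ∧
        ∀ E : ECtx, E.fv = ∅ →
          R (Tm.reset (t0'.subst k (contFun (E.comp E0))))
            (Tm.reset (t1'.subst k (contFun (E.comp E1)))))

/-- Applicative bisimulation. -/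
def IsAppBisim (R : Tm → Tm → Prop) : Prop :=
  IsAppSim R ∧ IsAppSim (fun a b => R b a)

/-- Applicative bisimilarity ≈_app: the largest applicative bisimulation. -/
def AppBisim (t0 t1 : Tm) : Prop := ∃ R, IsAppBisim R ∧ R t0 t1

/-- Simultaneous substitution (used only with closing substitutions mapping
variables to closed values, so no capture can occur). -/
def Tm.msubst : Tm → (ℕ → Tm) → Tm
  | .var x, σ => σ x
  | .lam x t, σ => Tm.lam x (t.msubst (Function.update σ x (Tm.var x)))
  | .app t u, σ => Tm.app (t.msubst σ) (u.msubst σ)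
  | .shift k t, σ => Tm.shift k (t.msubst (Function.update σ k (Tm.var k)))
  | .reset t, σ => Tm.reset (t.msubst σ)

/-- Open extension of a relation on closed terms: relate `t0σ` and `t1σ` for
every substitution σ mapping variables to closed values. -/
def OpenExt (R : Tm → Tm → Prop) (t0 t1 : Tm) : Prop :=
  ∀ σ : ℕ → Tm, (∀ x, IsValue (σ x) ∧ Closed (σ x)) →
    R (t0.msubst σ) (t1.msubst σ)

/-- ω := λx.x x. -/
def omegaTm : Tm := Tm.lam 0 (Tm.app (Tm.var 0) (Tm.var 0))

/-- Ω := ω ω, a diverging term. -/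
def OmegaTm : Tm := Tm.app omegaTm omegaTm



/-- α-variants of ω. -/
def om (x : ℕ) : Tm := Tm.lam x (Tm.app (Tm.var x) (Tm.var x))

/-- α-variants of Ω and Ω Ω. -/
inductive Dv : Tm → Prop
  | one (x y : ℕ) : Dv (Tm.app (om x) (om y))
  | two (x y z w : ℕ) : Dv (Tm.app (Tm.app (om x) (om y)) (Tm.app (om z) (om w)))

/-- Congruence closure relating diverging terms. -/
inductive Rel : Tm → Tm → Prop
  | base {d e : Tm} : Dv d → Dv e → Rel d e
  | var (x : ℕ) : Rel (Tm.var x) (Tm.var x)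
  | lam (x : ℕ) {t u : Tm} : Rel t u → Rel (Tm.lam x t) (Tm.lam x u)
  | app {t u t' u' : Tm} : Rel t t' → Rel u u' → Rel (Tm.app t u) (Tm.app t' u')
  | shift (x : ℕ) {t u : Tm} : Rel t u → Rel (Tm.shift x t) (Tm.shift x u)
  | reset {t u : Tm} : Rel t u → Rel (Tm.reset t) (Tm.reset u)

theorem Rel.rfl' (t : Tm) : Rel t t := by
  induction t with
  | var x => exact .var x
  | lam x t ih => exact .lam x ih
  | app t u h1 h2 => exact .app h1 h2
  | shift x t ih => exact .shift x ih
  | reset t ih => exact .reset ih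

theorem fresh_notMem (s : Finset ℕ) : fresh s ∉ s := by
  intro h
  have hs : s.Nonempty := ⟨_, h⟩
  have h2 := Finset.le_max' s _ h
  have h3 : fresh s = s.max' hs + 1 := by simp [fresh, hs]
  omega

theorem fv_om (x : ℕ) : (om x).fv = ∅ := by simp [om, Tm.fv]

theorem Dv.fv {d : Tm} (h : Dv d) : d.fv = ∅ := by
  cases h <;> simp [Tm.fv, fv_om]

theorem Rel.fv {t u : Tm} (h : Rel t u) : t.fv = u.fv := by
  induction h with
  | base h1 h2 => rw [h1.fv, h2.fv]
  | var => rfl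
  | lam x _ ih => simp [Tm.fv, ih]
  | app _ _ h1 h2 => simp [Tm.fv, h1, h2]
  | shift x _ ih => simp [Tm.fv, ih]
  | reset _ ih => simp [Tm.fv, ih]

theorem rename_om (x y z : ℕ) : (om x).rename y z = om x := by
  by_cases h : x = y <;> simp [om, Tm.rename, h]

theorem Dv.rename {d : Tm} (h : Dv d) (y z : ℕ) : Dv (d.rename y z) := by
  cases h <;> simp only [Tm.rename, rename_om] <;> constructor

theorem Rel.rename {t u : Tm} (h : Rel t u) (y z : ℕ) :
    Rel (t.rename y z) (u.rename y z) := by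
  induction h with
  | base h1 h2 => exact .base (h1.rename y z) (h2.rename y z)
  | var => exact Rel.rfl' _
  | lam x h ih =>
    simp only [Tm.rename]; split
    · exact .lam x h
    · exact .lam x ih
  | app _ _ h1 h2 => exact .app h1 h2
  | shift x h ih =>
    simp only [Tm.rename]; split
    · exact .shift x h
    · exact .shift x ih
  | reset _ ih => exact .reset ih

theorem subst_om (x y : ℕ) (v : Tm) : ∃ z, (om x).subst y v = om z := by
  unfold om
  rw [Tm.subst]
  split
  · exact ⟨x, rfl⟩
  · rename_i hxy
    split
    · refine ⟨fresh (v.fv ∪ (Tm.app (Tm.var x) (Tm.var x)).fv ∪ {y}), ?_⟩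
      · have hf := fresh_notMem (v.fv ∪ (Tm.app (Tm.var x) (Tm.var x)).fv ∪ {y})
        have hne : fresh (v.fv ∪ (Tm.app (Tm.var x) (Tm.var x)).fv ∪ {y}) ≠ y := by
          intro he
          apply hf
          rw [he]
          simp
        generalize fresh (v.fv ∪ (Tm.app (Tm.var x) (Tm.var x)).fv ∪ {y}) = f at hne
        simp only [Tm.rename, if_true, Tm.subst, if_neg hne]
    · refine ⟨x, ?_⟩
      simp only [Tm.subst, if_neg hxy]

theorem Dv.subst {d : Tm} (h : Dv d) (y : ℕ) (v : Tm) : Dv (d.subst y v) := by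
  cases h with
  | one a b =>
    obtain ⟨a', ha⟩ := subst_om a y v
    obtain ⟨b', hb⟩ := subst_om b y v
    simp only [Tm.subst, ha, hb]; constructor
  | two a b c d =>
    obtain ⟨a', ha⟩ := subst_om a y v
    obtain ⟨b', hb⟩ := subst_om b y v
    obtain ⟨c', hc⟩ := subst_om c y v
    obtain ⟨d', hd⟩ := subst_om d y v
    simp only [Tm.subst, ha, hb, hc, hd]; constructor

theorem Rel.subst_aux (n : ℕ) : ∀ {t u v w : Tm} (x : ℕ), t.size ≤ n → Rel t u → Rel v w →
    Rel (t.subst x v) (u.subst x w) := by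
  induction n with
  | zero => intro t u v w x hn; cases t <;> simp [Tm.size] at hn
  | succ n ih =>
    intro t u v w x hn h hv
    cases h with
    | base h1 h2 => exact .base (h1.subst _ _) (h2.subst _ _)
    | var y => 
      simp only [Tm.subst]; split
      · exact hv
      · exact .var y
    | lam y h =>
      simp only [Tm.size] at hn
      simp only [Tm.subst, ← h.fv, ← hv.fv]
      split
      · exact .lam y h
      · split
        · exact .lam _ (ih _ (by rw [Tm.size_rename]; omega) (h.rename _ _) hv)
        · exact .lam _ (ih _ (by omega) h hv)
    | app h1 h2 =>
      simp only [Tm.size] at hn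
      simp only [Tm.subst]
      exact .app (ih _ (by omega) h1 hv) (ih _ (by omega) h2 hv)
    | shift y h =>
      simp only [Tm.size] at hn
      simp only [Tm.subst, ← h.fv, ← hv.fv]
      split
      · exact .shift y h
      · split
        · exact .shift _ (ih _ (by rw [Tm.size_rename]; omega) (h.rename _ _) hv)
        · exact .shift _ (ih _ (by omega) h hv)
    | reset h =>
      simp only [Tm.size] at hn
      simp only [Tm.subst]
      exact .reset (ih _ (by omega) h hv)

theorem Rel.subst {t u v w : Tm} (x : ℕ) (h : Rel t u) (hv : Rel v w) :
    Rel (t.subst x v) (u.subst x w) := Rel.subst_aux _ x le_rfl h hv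

theorem Rel.value {t u : Tm} (h : Rel t u) (hv : IsValue t) : IsValue u := by
  cases hv with
  | var x =>
    cases h with
    | base h1 _ => cases h1
    | var => exact .var x
  | lam x t =>
    cases h with
    | base h1 _ => cases h1
    | lam => exact .lam _ _

/-- Structural presentation of reduction. -/
inductive Step : Tm → Tm → Prop
  | beta (x : ℕ) (t v : Tm) : IsValue v → Step (Tm.app (Tm.lam x t) v) (t.subst x v)
  | capture (E : ECtx) (k : ℕ) (t : Tm) :
      Step (Tm.reset (E.plug (Tm.shift k t))) (Tm.reset (t.subst k (contFun E)))
  | resetVal (v : Tm) : IsValue v → Step (Tm.reset v) v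
  | appL (u : Tm) {t t' : Tm} : Step t t' → Step (Tm.app t u) (Tm.app t' u)
  | appR (v : Tm) {t t' : Tm} : IsValue v → Step t t' → Step (Tm.app v t) (Tm.app v t')
  | reset {t t' : Tm} : Step t t' → Step (Tm.reset t) (Tm.reset t')

theorem Step.plug {t u : Tm} (h : Step t u) (F : FCtx) : Step (F.plug t) (F.plug u) := by
  induction F with
  | hole => exact h
  | appR v hv F ih => exact .appR v hv ih
  | appL F u ih => exact .appL u ih
  | reset F ih => exact .reset ih

theorem Red.step {t u : Tm} (h : Red t u) : Step t u := by
  cases h with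
  | beta F x t v hv => exact (Step.beta x t v hv).plug F
  | capture F E k t => exact (Step.capture E k t).plug F
  | resetVal F v hv => exact (Step.resetVal v hv).plug F

theorem Red.appL {t u : Tm} (h : Red t u) (s : Tm) : Red (Tm.app t s) (Tm.app u s) := by
  cases h with
  | beta F x t v hv => exact Red.beta (.appL F s) x t v hv
  | capture F E k t => exact Red.capture (.appL F s) E k t
  | resetVal F v hv => exact Red.resetVal (.appL F s) v hv

theorem Red.appR {t u : Tm} (h : Red t u) (s : Tm) (hs : IsValue s) :
    Red (Tm.app s t) (Tm.app s u) := by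
  cases h with
  | beta F x t v hv => exact Red.beta (.appR s hs F) x t v hv
  | capture F E k t => exact Red.capture (.appR s hs F) E k t
  | resetVal F v hv => exact Red.resetVal (.appR s hs F) v hv

theorem Red.reset {t u : Tm} (h : Red t u) : Red (Tm.reset t) (Tm.reset u) := by
  cases h with
  | beta F x t v hv => exact Red.beta (.reset F) x t v hv
  | capture F E k t => exact Red.capture (.reset F) E k t
  | resetVal F v hv => exact Red.resetVal (.reset F) v hv

theorem step_one {x y : ℕ} {s : Tm} (h : Step (Tm.app (om x) (om y)) s) :
    s = Tm.app (om y) (om y) := by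
  unfold om at h
  cases h with
  | beta x t v hv => simp [Tm.subst, om]
  | appL u h => cases h
  | appR v hv h => cases h

theorem Dv.step {d s : Tm} (hd : Dv d) (h : Step d s) : Dv s := by
  cases hd with
  | one x y => rw [step_one h]; constructor
  | two x y z w =>
    cases h with
    | appL u h => rw [step_one h]; constructor
    | appR v hv h => cases hv

/-- Absence of shift. -/
def noShift : Tm → Prop
  | .var _ => True
  | .lam _ t => noShift t
  | .app t u => noShift t ∧ noShift u
  | .shift _ _ => False
  | .reset t => noShift t

theorem Dv.noShift {d : Tm} (h : Dv d) : LambdaS.noShift d := by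
  cases h <;> simp [LambdaS.noShift, om]

theorem plug_shift (E : ECtx) (k : ℕ) (t : Tm) : ¬ noShift (E.plug (Tm.shift k t)) := by
  induction E with
  | hole => simp [ECtx.plug, noShift]
  | appR v hv E ih => simp [ECtx.plug, noShift, ih]
  | appL E u ih => simp [ECtx.plug, noShift, ih]

theorem Rel.plugShift (E : ECtx) {k : ℕ} {t u : Tm} (h : Rel (E.plug (Tm.shift k t)) u) :
    ∃ (E' : ECtx) (t' : Tm), u = E'.plug (Tm.shift k t') ∧ Rel t t' ∧ E.fv = E'.fv ∧
      ∀ a, Rel (E.plug a) (E'.plug a) := by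
  induction E generalizing u with
  | hole =>
    simp only [ECtx.plug] at h
    cases h with
    | base h1 _ => cases h1
    | shift _ h => exact ⟨.hole, _, rfl, h, rfl, fun a => Rel.rfl' a⟩
  | appR v hv E ih =>
    generalize hd : (ECtx.appR v hv E).plug (Tm.shift k t) = d at h
    cases h with
    | base h1 _ => exact absurd (hd ▸ h1.noShift) (plug_shift _ _ _)
    | app h1 h2 =>
      simp only [ECtx.plug, Tm.app.injEq] at hd
      obtain ⟨rfl, rfl⟩ := hd
      obtain ⟨E', t', rfl, ht, hf, ha⟩ := ih h2
      exact ⟨.appR _ (h1.value hv) E', t', rfl, ht, by simp [ECtx.fv, hf, h1.fv],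
        fun a => .app h1 (ha a)⟩
    | _ => simp [ECtx.plug] at hd
  | appL E w ih =>
    generalize hd : (ECtx.appL E w).plug (Tm.shift k t) = d at h
    cases h with
    | base h1 _ => exact absurd (hd ▸ h1.noShift) (plug_shift _ _ _)
    | app h1 h2 =>
      simp only [ECtx.plug, Tm.app.injEq] at hd
      obtain ⟨rfl, rfl⟩ := hd
      obtain ⟨E', t', rfl, ht, hf, ha⟩ := ih h1
      exact ⟨.appL E' _, t', rfl, ht, by simp [ECtx.fv, hf, h2.fv],
        fun a => .app (ha a) h2⟩
    | _ => simp [ECtx.plug] at hd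

theorem Rel.step {t s : Tm} (h : Step t s) : ∀ {u : Tm}, Rel t u →
    ∃ u', (u' = u ∨ Red u u') ∧ Rel s u' := by
  induction h with
  | beta x t v hv =>
    intro u hr
    cases hr with
    | base h1 h2 => exact ⟨u, .inl rfl, .base (h1.step (.beta x t v hv)) h2⟩
    | app h1 h2 =>
      cases h1 with
      | base h1 _ => cases h1
      | lam _ h1 =>
        exact ⟨_, .inr (Red.beta .hole x _ _ (h2.value hv)), h1.subst x h2⟩
  | capture E k t =>
    intro u hr
    cases hr with
    | base h1 h2 => cases h1
    | reset h =>
      obtain ⟨E', t', rfl, ht, hf, ha⟩ := h.plugShift E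
      refine ⟨_, .inr (Red.capture .hole E' k t'), .reset (ht.subst k ?_)⟩
      unfold contFun
      rw [← hf]
      exact .lam _ (.reset (ha _))
  | resetVal v hv =>
    intro u hr
    cases hr with
    | base h1 h2 => cases h1
    | reset h => exact ⟨_, .inr (Red.resetVal .hole _ (h.value hv)), h⟩
  | appL w hs ih =>
    intro u hr
    cases hr with
    | base h1 h2 => exact ⟨u, .inl rfl, .base (h1.step (.appL w hs)) h2⟩
    | app h1 h2 =>
      obtain ⟨u', h, hr⟩ := ih h1
      exact ⟨_, h.imp (fun e => by rw [e]) (fun e => e.appL _), .app hr h2⟩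
  | appR v hv hs ih =>
    intro u hr
    cases hr with
    | base h1 h2 => exact ⟨u, .inl rfl, .base (h1.step (.appR v hv hs)) h2⟩
    | app h1 h2 =>
      obtain ⟨u', h, hr⟩ := ih h2
      exact ⟨_, h.imp (fun e => by rw [e]) (fun e => e.appR _ (h1.value hv)), .app h1 hr⟩
  | reset hs ih =>
    intro u hr
    cases hr with
    | base h1 h2 => cases h1
    | reset h =>
      obtain ⟨u', h, hr⟩ := ih h
      exact ⟨_, h.imp (fun e => by rw [e]) (fun e => e.reset), .reset hr⟩

theorem Rel.steps {t s u : Tm} (h : Relation.ReflTransGen Red t s) (hr : Rel t u) :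
    ∃ u', Relation.ReflTransGen Red u u' ∧ Rel s u' := by
  induction h with
  | refl => exact ⟨u, .refl, hr⟩
  | tail _ h ih =>
    obtain ⟨u1, h1, hr1⟩ := ih
    obtain ⟨u2, h2, hr2⟩ := hr1.step h.step
    rcases h2 with rfl | h2
    · exact ⟨_, h1, hr2⟩
    · exact ⟨_, h1.tail h2, hr2⟩

theorem Rel.evalsToValue {t u : Tm} (hr : Rel t u) (h : EvalsToValue t) : EvalsToValue u := by
  obtain ⟨v, h, hv⟩ := h
  obtain ⟨u', h', hr'⟩ := hr.steps h
  exact ⟨u', h', hr'.value hv⟩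

theorem Rel.evalsToStuck {t u : Tm} (hr : Rel t u) (h : EvalsToStuck t) : EvalsToStuck u := by
  obtain ⟨_, h, E, k, s, rfl⟩ := h
  obtain ⟨u', h', hr'⟩ := hr.steps h
  obtain ⟨E', t', rfl, _⟩ := hr'.plugShift E
  exact ⟨_, h', E', k, t', rfl⟩

theorem Rel.ctx (C : Ctx) {t u : Tm} (h : Rel t u) : Rel (C.plug t) (C.plug u) := by
  induction C with
  | hole => exact h
  | lam x C ih => exact .lam x ih
  | appL C w ih => exact .app ih (Rel.rfl' w)
  | appR w C ih => exact .app (Rel.rfl' w) ih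
  | shift k C ih => exact .shift k ih
  | reset C ih => exact .reset ih

/-- The diverging terms Ω and Ω Ω are contextually equivalent in
the relaxed semantics. -/
theorem Omega_ctxEquiv_OmegaOmega :
    CtxEquiv OmegaTm (Tm.app OmegaTm OmegaTm) := by
  have h1 : Dv OmegaTm := Dv.one 0 0
  have h2 : Dv (Tm.app OmegaTm OmegaTm) := Dv.two 0 0 0 0
  intro C _
  have a := Rel.ctx C (Rel.base h1 h2)
  have b := Rel.ctx C (Rel.base h2 h1)
  exact ⟨⟨a.evalsToValue, b.evalsToValue⟩, ⟨a.evalsToStuck, b.evalsToStuck⟩⟩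

end LambdaS
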